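/- arXiv:1504.00354 — 3 statements merged into one kernel-verified Lean document; each statement's English description precedes it below -/
import Mathlib

section
/- Every lattice ordered effect algebra is homogeneous; that is, if E is an effect algebra whose induced partial order ≤ is a lattice, then for all u, v₁, v₂ ∈ E with v₁ ⊥ v₂, u ≤ v₁ ⊕ v₂ and u ≤ (v₁ ⊕ v₂)', there exist u₁ ≤ v₁ and u₂ ≤ v₂ with u = u₁ ⊕ u₂. -/
/-- An effect algebra: a partial commutative, associative operation `oplus`
(with definedness encoded via `Option`), constants `zero` and `one`,
unique orthosupplements, and `a ⊕ 1` defined only for `a = 0`. -/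
structure EffectAlgebra (E : Type*) where
  oplus : E → E → Option E
  zero : E
  one : E
  comm : ∀ a b, oplus a b = oplus b a
  assoc : ∀ a b c ab abc, oplus a b = some ab → oplus ab c = some abc →
    ∃ bc, oplus b c = some bc ∧ oplus a bc = some abc
  compl_exists : ∀ a, ∃ b, oplus a b = some one
  compl_unique : ∀ a b c, oplus a b = some one → oplus a c = some one → b = c
  add_one : ∀ a b, oplus a one = some b → a = zero

namespace EffectAlgebra

variable {E : Type*} (A : EffectAlgebra E)

/-- `a ⊥ b` : the sum `a ⊕ b` is defined. -/
def Perp (a b : E) : Prop := (A.oplus a b).isSome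

/-- `a ≤ b` iff `b = a ⊕ c` for some `c`. -/
def le (a b : E) : Prop := ∃ c, A.oplus a c = some b

/-- The orthosupplement `a'`: the unique `b` with `a ⊕ b = 1`. -/
noncomputable def compl (a : E) : E :=
  @Classical.epsilon E ⟨A.zero⟩ fun b => A.oplus a b = some A.one

/-- `a ⊖ b` : the unique `c` with `b ⊕ c = a` (defined when `b ≤ a`). -/
noncomputable def ominus (a b : E) : E :=
  @Classical.epsilon E ⟨A.zero⟩ fun c => A.oplus b c = some a

/-- Homogeneity. -/
def Homogeneous : Prop :=
  ∀ u v₁ v₂ s, A.oplus v₁ v₂ = some s → A.le u s → A.le u (A.compl s) →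
    ∃ u₁ u₂, A.le u₁ v₁ ∧ A.le u₂ v₂ ∧ A.oplus u₁ u₂ = some u

/-- Riesz decomposition property. -/
def RDP : Prop :=
  ∀ u v₁ v₂ s, A.oplus v₁ v₂ = some s → A.le u s →
    ∃ u₁ u₂, A.le u₁ v₁ ∧ A.le u₂ v₂ ∧ A.oplus u₁ u₂ = some u

/-- The sum `c₁ ⊕ … ⊕ cₙ` of a finite family (a list); `some s` iff the family
is orthogonal with sum `s`. -/
def sumList : List E → Option E
  | [] => some A.zero
  | x :: xs => (sumList xs).bind fun s => A.oplus x s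

/-- The subfamily of `C` indexed by a set of indices `S ⊆ {1,…,n}`. -/
def pickList (C : List E) (S : Finset (Fin C.length)) : List E :=
  (S.sort (· ≤ ·)).map C.get

/-- `C` is an orthogonal cover of `M`. -/
def IsCoverOf (C : List E) (M : Set E) : Prop :=
  (A.sumList C).isSome ∧
    ∀ a ∈ M, ∃ S : Finset (Fin C.length), A.sumList (pickList C S) = some a

/-- `M` is compatible with covers in `X`: every finite subset of `M` has an
orthogonal cover with range contained in `X`. -/
def CompatWithCoversIn (M X : Set E) : Prop :=
  ∀ F : Finset E, ↑F ⊆ M →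
    ∃ C : List E, (∀ c ∈ C, c ∈ X) ∧ A.IsCoverOf C ↑F

/-- `M` is compatible (with covers in `E`). -/
def Compatible (M : Set E) : Prop := A.CompatWithCoversIn M Set.univ

/-- `M` is internally compatible. -/
def InternallyCompatible (M : Set E) : Prop := A.CompatWithCoversIn M M

/-- `D` is a refinement of `C`: a partition `{P i}` of the index set of `D`
with `C i = ⊕_{j ∈ P i} D j`. -/
def IsRefinement (D C : List E) : Prop :=
  ∃ P : Fin C.length → Finset (Fin D.length),
    (∀ i j, i ≠ j → Disjoint (P i) (P j)) ∧
    (∀ k, ∃ i, k ∈ P i) ∧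
    (∀ i, A.sumList (pickList D (P i)) = some (C.get i))

/-- One step of the closure construction `M ↦ M₁`. -/
def closureStep (M : Set E) : Set E :=
  {x | ∃ y ∈ M, A.le x y ∧ A.le x (A.compl y)} ∪
  {z | ∃ y ∈ M, ∃ x, A.le x y ∧ A.le x (A.compl y) ∧ A.oplus x z = some y}

/-- The sets `Mₙ`. -/
def closureSeq (M : Set E) (n : ℕ) : Set E := (A.closureStep)^[n] M

/-- The closure `M̄ = ⋃ₙ Mₙ`. -/
def closure (M : Set E) : Set E := ⋃ n, A.closureSeq M n

/-- `B` is a sub-effect algebra of `E`. -/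
def IsSubEA (B : Set E) : Prop :=
  A.one ∈ B ∧ ∀ a ∈ B, ∀ b ∈ B, A.le b a → A.ominus a b ∈ B

/-- The Riesz decomposition property for (the effect algebra on) a subset `B`. -/
def RDPOn (B : Set E) : Prop :=
  ∀ u v₁ v₂ s, u ∈ B → v₁ ∈ B → v₂ ∈ B → A.oplus v₁ v₂ = some s → A.le u s →
    ∃ u₁ u₂, u₁ ∈ B ∧ u₂ ∈ B ∧ A.le u₁ v₁ ∧ A.le u₂ v₂ ∧ A.oplus u₁ u₂ = some u

/-- Homogeneity for (the effect algebra on) a subset `B`. -/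
def HomogeneousOn (B : Set E) : Prop :=
  ∀ u v₁ v₂ s, u ∈ B → v₁ ∈ B → v₂ ∈ B → A.oplus v₁ v₂ = some s →
    A.le u s → A.le u (A.compl s) →
    ∃ u₁ u₂, u₁ ∈ B ∧ u₂ ∈ B ∧ A.le u₁ v₁ ∧ A.le u₂ v₂ ∧ A.oplus u₁ u₂ = some u

/-- A block: a maximal sub-effect algebra satisfying the Riesz decomposition
property. -/
def IsBlock (B : Set E) : Prop :=
  A.IsSubEA B ∧ A.RDPOn B ∧
    ∀ B', A.IsSubEA B' → A.RDPOn B' → B ⊆ B' → B' = B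

/-- A block of the sub-effect algebra on `F`: a maximal sub-effect algebra of
`F` satisfying the Riesz decomposition property. -/
def IsBlockIn (F B : Set E) : Prop :=
  B ⊆ F ∧ A.IsSubEA B ∧ A.RDPOn B ∧
    ∀ B', B' ⊆ F → A.IsSubEA B' → A.RDPOn B' → B ⊆ B' → B' = B

/-- `a` is sharp: the infimum `a ∧ a'` exists and equals `0`, i.e. every common
lower bound of `a` and `a'` is `0`. -/
def Sharp (a : E) : Prop :=
  ∀ b, A.le b a → A.le b (A.compl a) → b = A.zero

/-- `a` is sharp in the sub-effect algebra on `F`. -/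
def SharpIn (F : Set E) (a : E) : Prop :=
  a ∈ F ∧ ∀ b ∈ F, A.le b a → A.le b (A.compl a) → b = A.zero

/-- `a` is principal. -/
def Principal (a : E) : Prop :=
  ∀ x y s, A.le x a → A.le y a → A.oplus x y = some s → A.le s a

/-- `a` is principal in the sub-effect algebra on `B`. -/
def PrincipalIn (B : Set E) (a : E) : Prop :=
  a ∈ B ∧ ∀ x ∈ B, ∀ y ∈ B, ∀ s, A.le x a → A.le y a →
    A.oplus x y = some s → A.le s a

/-- `a` is central: principal, and every `b` has a unique decomposition
`b = b₁ ⊕ b₂` with `b₁ ≤ a`, `b₂ ≤ a'`. -/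
def Central (a : E) : Prop :=
  A.Principal a ∧ ∀ b, ∃! p : E × E,
    A.le p.1 a ∧ A.le p.2 (A.compl a) ∧ A.oplus p.1 p.2 = some b

/-- `a` is central in the sub-effect algebra on `B`. -/
def CentralIn (B : Set E) (a : E) : Prop :=
  A.PrincipalIn B a ∧ ∀ b ∈ B, ∃! p : E × E,
    p.1 ∈ B ∧ p.2 ∈ B ∧ A.le p.1 a ∧ A.le p.2 (A.compl a) ∧
      A.oplus p.1 p.2 = some b

/-- The center `C(E)`. -/
def center : Set E := {a | A.Central a}

/-- The compatibility center `K(E)`: the intersection of all blocks. -/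
def compatCenter : Set E := {x | ∀ B, A.IsBlock B → x ∈ B}

end EffectAlgebra

/-!
Let `s = v₁ ⊕ v₂`. Since `u ≤ s'` and `v₁ ≤ s`, the sum `w = u ⊕ v₁` is defined, and both `u` and
`v₁` lie below both `s` and `w`. For any `j` with `u, v₁ ≤ j ≤ s, w`, put `u₁ = w ⊖ j` and
`u₂ = j ⊖ v₁`. Then `u₁ ⊕ u₂ = w ⊖ v₁ = u`, while `u₁ ≤ w ⊖ u = v₁` and `u₂ ≤ s ⊖ v₁ = v₂`.
Such a `j` is an interpolant; in a lattice, `u ∨ v₁` is one.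
-/

namespace EffectAlgebra

variable {E : Type*} (A : EffectAlgebra E)

/-- The Riesz interpolation property: if `a₁, a₂ ≤ b₁, b₂`, some element lies above both `aᵢ` and
below both `bᵢ`. It is the common source of homogeneity for lattice ordered effect algebras and
for non-lattice ones with interpolation. -/
def RieszInterpolation : Prop :=
  ∀ a₁ a₂ b₁ b₂, A.le a₁ b₁ → A.le a₁ b₂ → A.le a₂ b₁ → A.le a₂ b₂ →
    ∃ c, A.le a₁ c ∧ A.le a₂ c ∧ A.le c b₁ ∧ A.le c b₂

theorem rieszInterpolation_of_exists_sup
    (hsup : ∀ a b : E, ∃ j, A.le a j ∧ A.le b j ∧ ∀ x, A.le a x → A.le b x → A.le j x) :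
    A.RieszInterpolation := by
  intro a₁ a₂ b₁ b₂ h₁₁ h₁₂ h₂₁ h₂₂
  obtain ⟨j, ha₁j, ha₂j, hj⟩ := hsup a₁ a₂
  exact ⟨j, ha₁j, ha₂j, hj b₁ h₁₁ h₂₁, hj b₂ h₁₂ h₂₂⟩

theorem oplus_compl (a : E) : A.oplus a (A.compl a) = some A.one :=
  Classical.epsilon_spec (A.compl_exists a)

variable {A} {a b c x y : E}

theorem le_of_oplus_eq_left (h : A.oplus a b = some x) : A.le a x :=
  ⟨b, h⟩

theorem le_of_oplus_eq_right (h : A.oplus a b = some x) : A.le b x :=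
  ⟨a, A.comm b a ▸ h⟩

theorem Perp.symm (h : A.Perp a b) : A.Perp b a := by
  rwa [Perp, A.comm]

theorem Perp.mono_right (h : A.Perp a c) (hbc : A.le b c) : A.Perp a b := by
  obtain ⟨d, hd⟩ := hbc
  obtain ⟨x, hx⟩ := Option.isSome_iff_exists.mp h.symm
  rw [A.comm] at hd
  obtain ⟨ba, hba, -⟩ := A.assoc _ _ _ _ _ hd hx
  exact Perp.symm (Option.isSome_of_eq_some hba)

theorem perp_of_le_compl (h : A.le a (A.compl b)) : A.Perp a b :=
  (Perp.mono_right (Option.isSome_of_eq_some (A.oplus_compl b)) h).symm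

-- Completing the common sum to `1` reduces cancellation to uniqueness of orthosupplements.
theorem oplus_left_cancel (hb : A.oplus a b = some x) (hc : A.oplus a c = some x) : b = c := by
  have hx := A.oplus_compl x
  rw [A.comm] at hb hc
  obtain ⟨y, hay, hby⟩ := A.assoc _ _ _ _ _ hb hx
  obtain ⟨z, haz, hcz⟩ := A.assoc _ _ _ _ _ hc hx
  obtain rfl : y = z := Option.some.inj (hay.symm.trans haz)
  rw [A.comm] at hby hcz
  exact A.compl_unique _ _ _ hby hcz

theorem oplus_eq_of_oplus_oplus_eq (hab : A.oplus a b = some x) (hxc : A.oplus x c = some y)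
    {d : E} (had : A.oplus a d = some y) : A.oplus b c = some d := by
  obtain ⟨bc, hbc, habc⟩ := A.assoc _ _ _ _ _ hab hxc
  rw [hbc, oplus_left_cancel habc had]

end EffectAlgebra

open EffectAlgebra in
theorem lattice_ordered_homogeneous_general {E : Type*} (A : EffectAlgebra E)
    (hA : A.RieszInterpolation) : A.Homogeneous := by
  intro u v₁ v₂ s hs hus hus'
  have hperp : A.Perp u v₁ := (perp_of_le_compl hus').mono_right (le_of_oplus_eq_left hs)
  obtain ⟨w, hw⟩ := Option.isSome_iff_exists.mp hperp
  have hw' : A.oplus v₁ u = some w := A.comm v₁ u ▸ hw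
  obtain ⟨j, ⟨e, he⟩, ⟨u₂, hu₂⟩, ⟨g, hg⟩, ⟨u₁, hu₁⟩⟩ :=
    hA u v₁ s w hus (le_of_oplus_eq_left hw) (le_of_oplus_eq_left hs) (le_of_oplus_eq_right hw)
  have hv₁ : A.oplus e u₁ = some v₁ := oplus_eq_of_oplus_oplus_eq he hu₁ hw
  have hv₂ : A.oplus u₂ g = some v₂ := oplus_eq_of_oplus_oplus_eq hu₂ hg hs
  have hu : A.oplus u₂ u₁ = some u := oplus_eq_of_oplus_oplus_eq hu₂ hu₁ hw'
  exact ⟨u₁, u₂, le_of_oplus_eq_right hv₁, le_of_oplus_eq_left hv₂, A.comm u₁ u₂ ▸ hu⟩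

/-- Every lattice ordered effect algebra is homogeneous. -/
theorem lattice_ordered_homogeneous {E : Type*} (A : EffectAlgebra E)
    (hinf : ∀ a b : E, ∃ m, A.le m a ∧ A.le m b ∧ ∀ x, A.le x a → A.le x b → A.le x m)
    (hsup : ∀ a b : E, ∃ j, A.le a j ∧ A.le b j ∧ ∀ x, A.le a x → A.le b x → A.le j x) :
    A.Homogeneous :=
  lattice_ordered_homogeneous_general A (A.rieszInterpolation_of_exists_sup hsup)
end

section
/- Let E be a homogeneous effect algebra, let M ⊆ E be a finite compatible set, and let a, b ∈ M with b ≤ a. Let C = (c₁, …, c_k) be an orthogonal cover of M and let A, B ⊆ {1,…,k} be such that a = ⊕_{i∈A} cᵢ and b = ⊕_{i∈B} cᵢ. Then there exist a refinement W = (w₁, …, wₙ) of C and sets B_W ⊆ A_W ⊆ {1,…,n} such that (wᵢ)_{i∈A_W} is a refinement of (cᵢ)_{i∈A}, (wᵢ)_{i∈B_W} is a refinement of (cᵢ)_{i∈B}, and the range of W is contained in the closure of the range of C. -/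
/-!
Put `S = A \ B` and `T = B \ A`. Cancelling the common part of `b ≤ a` gives
`⊕_{j ∈ T} cⱼ ≤ ⊕_{i ∈ S} cᵢ`, and these two sums are orthogonal because `S` and `T` are disjoint.
Hence homogeneity applies to each `cⱼ`, `j ∈ T`, in turn, and spreads it over what is left of the
`cᵢ`, `i ∈ S`. The result is a matrix `(m i j)` with column sums `cⱼ` and with rows that, together
with remainders `r i`, sum to `cᵢ`. Replacing each `cᵢ`, `i ∈ S`, by `r i` and its row refines `C`;
the same matrix read by columns refines `(cⱼ)`, `j ∈ T`, by members of the refinement of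
`(cᵢ)`, `i ∈ A`. Each split of `cᵢ` is off a part orthogonal to the element being split, so it stays
in the closure.
-/

namespace EffectAlgebra

variable {E : Type*} {A : EffectAlgebra E}

/-- The values of partial sums in an effect algebra: the elements of `E` together with one further
element `⊤` for undefined sums. With `⊤` absorbing, the partial operation `⊕` becomes the addition
of a canonically ordered commutative monoid, in which `x ≠ ⊤` says that `x` is defined. -/
def PartialSum (_ : EffectAlgebra E) : Type _ := Option E

namespace PartialSum

/-- The inclusion of an effect algebra into its partial sums. -/
@[coe] def of (a : E) : PartialSum A := some a

instance : CoeTail E (PartialSum A) := ⟨of⟩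

instance : Top (PartialSum A) := ⟨none⟩

instance : Zero (PartialSum A) := ⟨(A.zero : PartialSum A)⟩

instance : Add (PartialSum A) := ⟨fun x y => Option.bind x fun a => Option.bind y (A.oplus a)⟩

theorem coe_ne_top (a : E) : (a : PartialSum A) ≠ ⊤ := Option.some_ne_none a

theorem coe_add_coe_eq_coe_iff {a b c : E} :
    (a + b : PartialSum A) = c ↔ A.oplus a b = some c := Iff.rfl

theorem exists_coe_eq {x : PartialSum A} (hx : x ≠ ⊤) : ∃ a : E, (a : PartialSum A) = x :=
  (Option.ne_none_iff_exists (o := x)).1 hx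

protected theorem add_top (x : PartialSum A) : x + ⊤ = ⊤ := by
  cases x <;> rfl

protected theorem add_comm (x y : PartialSum A) : x + y = y + x := by
  rcases x with _ | a <;> rcases y with _ | b <;> first | rfl | exact A.comm a b

protected theorem top_add (x : PartialSum A) : ⊤ + x = ⊤ := rfl

theorem left_ne_top {x y : PartialSum A} (h : x + y ≠ ⊤) : x ≠ ⊤ := by
  rintro rfl
  exact h (PartialSum.top_add y)

theorem right_ne_top {x y : PartialSum A} (h : x + y ≠ ⊤) : y ≠ ⊤ := by
  rintro rfl
  exact h (PartialSum.add_top x)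

theorem add_assoc_of_ne_top {x y z : PartialSum A} (h : x + y + z ≠ ⊤) :
    x + y + z = x + (y + z) := by
  obtain ⟨s, hs⟩ := exists_coe_eq h
  obtain ⟨xy, hxy⟩ := exists_coe_eq (left_ne_top h)
  obtain ⟨c, rfl⟩ := exists_coe_eq (right_ne_top h)
  obtain ⟨a, rfl⟩ := exists_coe_eq (left_ne_top (left_ne_top h))
  obtain ⟨b, rfl⟩ := exists_coe_eq (right_ne_top (left_ne_top h))
  obtain ⟨bc, hbc, habc⟩ := A.assoc a b c xy s hxy.symm (by rw [← hxy] at hs; exact hs.symm)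
  rw [← coe_add_coe_eq_coe_iff] at hbc habc
  rw [← hs, hbc, habc]

protected theorem add_assoc (x y z : PartialSum A) : x + y + z = x + (y + z) := by
  by_cases h : x + y + z = ⊤
  · by_contra hne
    have h' : z + y + x ≠ ⊤ := by
      rw [PartialSum.add_comm _ x, PartialSum.add_comm z y]
      exact fun h' => hne (h.trans h'.symm)
    apply hne
    rw [PartialSum.add_comm x (y + z), PartialSum.add_comm y z, add_assoc_of_ne_top h',
      PartialSum.add_comm z, PartialSum.add_comm y x]
  · exact add_assoc_of_ne_top h

protected theorem add_zero (x : PartialSum A) : x + 0 = x := by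
  rcases x with _ | a
  · rfl
  have one_add_zero : A.oplus A.one A.zero = some A.one := by
    obtain ⟨b, hb⟩ := A.compl_exists A.one
    rwa [A.add_one b A.one (A.comm _ _ ▸ hb)] at hb
  obtain ⟨b, hab⟩ := A.compl_exists a
  have hba : A.oplus b a = some A.one := A.comm a b ▸ hab
  obtain ⟨c, hc, hbc⟩ := A.assoc b a A.zero A.one A.one hba one_add_zero
  exact hc.trans (congrArg some (A.compl_unique b c a hbc hba))

instance : AddCommMonoid (PartialSum A) where
  add_assoc := PartialSum.add_assoc
  add_comm := PartialSum.add_comm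
  zero_add x := (PartialSum.add_comm 0 x).trans (PartialSum.add_zero x)
  add_zero := PartialSum.add_zero
  nsmul := nsmulRec

theorem exists_add_eq_one {x : PartialSum A} (hx : x ≠ ⊤) :
    ∃ y : PartialSum A, x + y = A.one := by
  obtain ⟨a, rfl⟩ := exists_coe_eq hx
  obtain ⟨b, hb⟩ := A.compl_exists a
  exact ⟨b, hb⟩

theorem eq_of_add_eq_one {x y z : PartialSum A} (hy : x + y = A.one) (hz : x + z = A.one) :
    y = z := by
  have hxy : x + y ≠ ⊤ := hy ▸ coe_ne_top A.one
  have hxz : x + z ≠ ⊤ := hz ▸ coe_ne_top A.one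
  obtain ⟨a, rfl⟩ := exists_coe_eq (left_ne_top hxy)
  obtain ⟨b, rfl⟩ := exists_coe_eq (right_ne_top hxy)
  obtain ⟨c, rfl⟩ := exists_coe_eq (right_ne_top hxz)
  rw [A.compl_unique a b c hy hz]

theorem add_left_cancel_of_ne_top {x y z : PartialSum A} (hx : x + y ≠ ⊤) (h : x + y = x + z) :
    y = z := by
  obtain ⟨t, ht⟩ := exists_add_eq_one hx
  refine eq_of_add_eq_one (x := x + t) ?_ ?_
  · rw [add_right_comm, ht]
  · rw [add_right_comm, ← h, ht]

theorem eq_zero_of_add_eq_zero {x y : PartialSum A} (h : x + y = 0) : x = 0 := by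
  have hone : x + A.one + y = (A.one : PartialSum A) := by rw [add_right_comm, h, zero_add]
  have hx : x + A.one ≠ ⊤ := left_ne_top (hone ▸ coe_ne_top A.one)
  obtain ⟨s, hs⟩ := exists_coe_eq hx
  obtain ⟨a, rfl⟩ := exists_coe_eq (left_ne_top hx)
  rw [A.add_one a s hs.symm]
  rfl

instance : PartialOrder (PartialSum A) where
  le x y := ∃ z, y = x + z
  le_refl x := ⟨0, (add_zero x).symm⟩
  le_trans := by
    rintro x _ _ ⟨z, rfl⟩ ⟨t, rfl⟩
    exact ⟨z + t, add_assoc x z t⟩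
  le_antisymm := by
    rintro x _ ⟨z, rfl⟩ ⟨t, hx⟩
    by_cases htop : x = ⊤
    · rw [htop, PartialSum.top_add]
    · have hzt : 0 = z + t := add_left_cancel_of_ne_top (x := x)
        (by rwa [add_zero]) (by rwa [add_zero, ← add_assoc])
      rw [eq_zero_of_add_eq_zero hzt.symm, add_zero]

instance : OrderTop (PartialSum A) where
  le_top x := ⟨⊤, (PartialSum.add_top x).symm⟩

instance : IsOrderedAddMonoid (PartialSum A) where
  add_le_add_left := by
    rintro x _ ⟨z, rfl⟩ y
    exact ⟨z, add_right_comm x z y⟩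

instance : CanonicallyOrderedAdd (PartialSum A) where
  exists_add_of_le h := h
  le_add_self x y := ⟨y, add_comm y x⟩
  le_self_add _ y := ⟨y, rfl⟩

theorem le_of_add_le_add_left_of_ne_top {x y z : PartialSum A} (hz : x + z ≠ ⊤)
    (h : x + y ≤ x + z) : y ≤ z := by
  obtain ⟨t, ht⟩ := h
  exact ⟨t, add_left_cancel_of_ne_top hz (by rw [ht, add_assoc])⟩

theorem sum_sdiff_le_sum_sdiff {κ : Type*} [DecidableEq κ] {c : κ → PartialSum A} {S T : Finset κ}
    (hT : ∑ i ∈ T, c i ≠ ⊤) (h : ∑ i ∈ S, c i ≤ ∑ i ∈ T, c i) :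
    ∑ i ∈ S \ T, c i ≤ ∑ i ∈ T \ S, c i := by
  rw [← Finset.sum_inter_add_sum_sdiff S T, ← Finset.sum_inter_add_sum_sdiff T S,
    Finset.inter_comm T S] at h
  rw [← Finset.sum_inter_add_sum_sdiff T S, Finset.inter_comm T S] at hT
  exact le_of_add_le_add_left_of_ne_top hT h

theorem coe_le_coe_iff {a b : E} : (a : PartialSum A) ≤ b ↔ A.le a b := by
  constructor
  · rintro ⟨z, hz⟩
    obtain ⟨c, rfl⟩ := exists_coe_eq (right_ne_top (hz ▸ coe_ne_top b))
    exact ⟨c, hz.symm⟩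
  · rintro ⟨c, hc⟩
    exact ⟨c, hc.symm⟩

theorem coe_le_coe_compl_iff {a b : E} :
    (a : PartialSum A) ≤ A.compl b ↔ (a + b : PartialSum A) ≠ ⊤ := by
  have hb : (b + A.compl b : PartialSum A) = A.one :=
    @Classical.epsilon_spec_aux E ⟨A.zero⟩ (A.oplus b · = some A.one) (A.compl_exists b)
  constructor
  · intro hle
    rw [add_comm]
    exact ne_top_of_le_ne_top (hb ▸ coe_ne_top A.one) (add_le_add_right hle _)
  · intro hab
    obtain ⟨t, ht⟩ := exists_add_eq_one hab
    exact ⟨t, eq_of_add_eq_one hb (by rw [← ht]; abel)⟩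

end PartialSum

open PartialSum

section Decomposition

variable {κ ι : Type*}

theorem Homogeneous.exists_add_eq_of_le_add (hH : A.Homogeneous) {u x y : PartialSum A}
    (hle : u ≤ x + y) (hperp : u + (x + y) ≠ ⊤) : ∃ u₁ ≤ x, ∃ u₂ ≤ y, u₁ + u₂ = u := by
  obtain ⟨s, hs⟩ := exists_coe_eq (right_ne_top hperp)
  obtain ⟨a, rfl⟩ := exists_coe_eq (left_ne_top hperp)
  obtain ⟨b, rfl⟩ := exists_coe_eq (left_ne_top (right_ne_top hperp))
  obtain ⟨c, rfl⟩ := exists_coe_eq (right_ne_top (right_ne_top hperp))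
  rw [← hs] at hle hperp
  obtain ⟨u₁, u₂, h₁, h₂, hu⟩ :=
    hH a b c s hs.symm (coe_le_coe_iff.1 hle) (coe_le_coe_iff.1 (coe_le_coe_compl_iff.2 hperp))
  exact ⟨u₁, coe_le_coe_iff.2 h₁, u₂, coe_le_coe_iff.2 h₂, hu⟩

theorem Homogeneous.exists_sum_eq_of_le_sum (hH : A.Homogeneous) (S : Finset κ)
    (c : κ → PartialSum A) {u : PartialSum A} (hle : u ≤ ∑ i ∈ S, c i)
    (hperp : u + ∑ i ∈ S, c i ≠ ⊤) :
    ∃ v : κ → PartialSum A, (∀ i ∈ S, v i ≤ c i) ∧ ∑ i ∈ S, v i = u := by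
  classical
  induction S using Finset.induction_on generalizing u with
  | empty => exact ⟨0, by simp, (nonpos_iff_eq_zero.1 hle).symm⟩
  | insert k S hk ih =>
    rw [Finset.sum_insert hk] at hle hperp
    obtain ⟨u₁, h₁, u₂, h₂, rfl⟩ := hH.exists_add_eq_of_le_add hle hperp
    obtain ⟨v, hv, hsum⟩ :=
      ih h₂ (ne_top_of_le_ne_top hperp (add_le_add le_add_self le_add_self))
    have hne {i : κ} (hi : i ∈ S) : i ≠ k := ne_of_mem_of_not_mem hi hk
    refine ⟨Function.update v k u₁, fun i hi => ?_, ?_⟩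
    · rcases Finset.mem_insert.1 hi with rfl | hi
      · simpa using h₁
      · simpa [hne hi] using hv i hi
    · rw [Finset.sum_insert hk, Finset.sum_update_of_notMem hk, Function.update_self, hsum]

theorem Homogeneous.exists_matrix_of_sum_le_sum (hH : A.Homogeneous) (S : Finset κ) (T : Finset ι)
    (c : κ → PartialSum A) (d : ι → PartialSum A) (hle : ∑ j ∈ T, d j ≤ ∑ i ∈ S, c i)
    (hperp : ∑ j ∈ T, d j + ∑ i ∈ S, c i ≠ ⊤) :
    ∃ m : κ → ι → PartialSum A,
      (∀ i ∈ S, ∑ j ∈ T, m i j ≤ c i) ∧ ∀ j ∈ T, ∑ i ∈ S, m i j = d j := by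
  classical
  induction T using Finset.induction_on generalizing c with
  | empty => exact ⟨0, by simp, by simp⟩
  | insert k T hk ih =>
    rw [Finset.sum_insert hk] at hle hperp
    obtain ⟨v, hv, hvsum⟩ := hH.exists_sum_eq_of_le_sum S c (le_self_add.trans hle)
      (ne_top_of_le_ne_top hperp (add_le_add_left le_self_add _))
    choose! r hr using fun i hi => exists_add_of_le (hv i hi)
    have hsplit : ∑ i ∈ S, c i = d k + ∑ i ∈ S, r i := by
      rw [← hvsum, ← Finset.sum_add_distrib, Finset.sum_congr rfl hr]
    rw [hsplit] at hle hperp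
    obtain ⟨m, hrow, hcol⟩ := ih r (le_of_add_le_add_left_of_ne_top (right_ne_top hperp) hle)
      (ne_top_of_le_ne_top hperp (add_le_add le_add_self le_add_self))
    refine ⟨fun i => Function.update (m i) k (v i), fun i hi => ?_, fun j hj => ?_⟩
    · dsimp only
      rw [Finset.sum_insert hk, Finset.sum_update_of_notMem hk, Function.update_self, hr i hi]
      exact add_le_add_right (hrow i hi) _
    · rcases Finset.mem_insert.1 hj with rfl | hj
      · simpa using hvsum
      · simpa [ne_of_mem_of_not_mem hj hk] using hcol j hj

/-- Closedness of a set of partial sums under the steps generating the closure of a set of effects: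
an element `y` of the set may be split as `u ⊕ v` whenever `u ⊥ y`. -/
def IsSplitClosed (X : Set (PartialSum A)) : Prop :=
  ∀ ⦃u v : PartialSum A⦄, u + v ∈ X → u + (u + v) ≠ ⊤ → u ∈ X ∧ v ∈ X

theorem isSplitClosed_closure (M : Set E) :
    IsSplitClosed ((↑) '' A.closure M : Set (PartialSum A)) := by
  rintro u v ⟨y, hy, huv⟩ hperp
  obtain ⟨a, rfl⟩ := exists_coe_eq (left_ne_top hperp)
  obtain ⟨b, rfl⟩ := exists_coe_eq (right_ne_top (right_ne_top hperp))
  rw [← huv] at hperp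
  obtain ⟨n, hn⟩ := Set.mem_iUnion.1 hy
  have hle : A.le a y := ⟨b, huv.symm⟩
  have hle' : A.le a (A.compl y) := coe_le_coe_iff.1 (coe_le_coe_compl_iff.2 hperp)
  have hsucc : A.closureStep (A.closureSeq M n) ⊆ A.closure M := by
    rw [closureSeq, ← Function.iterate_succ_apply' A.closureStep]
    exact Set.subset_iUnion (A.closureSeq M) (n + 1)
  exact ⟨Set.mem_image_of_mem _ (hsucc (Or.inl ⟨y, hn, hle, hle'⟩)),
    Set.mem_image_of_mem _ (hsucc (Or.inr ⟨y, hn, a, hle, hle', huv.symm⟩))⟩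

theorem subset_closure (M : Set E) : M ⊆ A.closure M :=
  Set.subset_iUnion (A.closureSeq M) 0

theorem IsSplitClosed.mem_of_sum_add_mem {X : Set (PartialSum A)} (hX : IsSplitClosed X)
    {T : Finset ι} {m : ι → PartialSum A} {r : PartialSum A} (hmem : ∑ j ∈ T, m j + r ∈ X)
    (hperp : ∑ j ∈ T, m j + (∑ j ∈ T, m j + r) ≠ ⊤) : (∀ j ∈ T, m j ∈ X) ∧ r ∈ X := by
  classical
  induction T using Finset.induction_on with
  | empty => simpa using hmem
  | insert k T hk ih =>
    rw [Finset.sum_insert hk, add_assoc (m k) _ r] at hmem hperp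
    obtain ⟨hmk, hrest⟩ := hX hmem (ne_top_of_le_ne_top hperp (add_le_add_left le_self_add _))
    obtain ⟨hmT, hr⟩ := ih hrest
      (ne_top_of_le_ne_top hperp (add_le_add le_add_self le_add_self))
    exact ⟨by simpa [hmk] using hmT, hr⟩

end Decomposition

/-- The map `f` exhibits the family `(w p)`, `p ∈ T`, as a refinement of the family `(c i)`,
`i ∈ S`: the blocks of the partition of `T` are the fibres of `f`. -/
structure RefinesVia {P ι κ : Type*} [AddCommMonoid P] [DecidableEq κ] (f : ι → κ)
    (w : ι → P) (T : Finset ι) (c : κ → P) (S : Finset κ) : Prop where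
  mapsTo : ∀ p ∈ T, f p ∈ S
  sum_fiber : ∀ i ∈ S, ∑ p ∈ T with f p = i, w p = c i

section Exchange

variable {P κ : Type*} [AddCommMonoid P] [DecidableEq κ] {S T s : Finset κ} {c r : κ → P}
  {m : κ → κ → P}

/-- The family consisting of all `r i` and the entries of the `S × T` matrix `m`. When row `i` of
`m` and `r i` add up to `c i`, and column `j` of `m` adds up to `c j`, it refines `c` in two
ways. -/
def exchangeFamily (S T : Finset κ) (r : κ → P) (m : κ → κ → P) : κ ⊕ S × T → P :=
  Sum.elim r fun q => m q.1 q.2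

theorem sum_fiber_exchangeFamily (f : κ → κ → κ) (s : Finset κ) (i : κ) :
    ∑ p ∈ s.disjSum Finset.univ with Sum.elim id (fun q : S × T => f q.1 q.2) p = i,
        exchangeFamily S T r m p =
      (if i ∈ s then r i else 0) + ∑ k ∈ S, ∑ j ∈ T, if f k j = i then m k j else 0 := by
  rw [Finset.sum_filter, Finset.sum_disjSum]
  congr 1
  · exact Finset.sum_ite_eq' s i r
  · rw [Fintype.sum_prod_type]
    exact (Finset.sum_coe_sort S fun k => ∑ j : T, if f k j = i then m k j else 0).trans
      (Finset.sum_congr rfl fun k _ =>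
        Finset.sum_coe_sort T fun j => if f k j = i then m k j else 0)

theorem refinesVia_exchangeFamily_row (hs : S ⊆ s)
    (hrow : ∀ i ∈ S, ∑ j ∈ T, m i j + r i = c i) (hfix : ∀ i ∉ S, r i = c i) :
    RefinesVia (Sum.elim id fun q : S × T => (q.1 : κ)) (exchangeFamily S T r m)
      (s.disjSum Finset.univ) c s where
  mapsTo := by
    rintro (i | ⟨i, j⟩) hp
    · simpa using hp
    · exact hs i.2
  sum_fiber i hi := by
    rw [sum_fiber_exchangeFamily (fun k _ => k), if_pos hi, Finset.sum_comm]
    simp_rw [Finset.sum_ite_eq']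
    by_cases hiS : i ∈ S
    · simp_rw [if_pos hiS]
      rw [add_comm, hrow i hiS]
    · simp_rw [if_neg hiS, Finset.sum_const_zero, add_zero, hfix i hiS]

theorem refinesVia_exchangeFamily_col (hs : Disjoint s T)
    (hcol : ∀ j ∈ T, ∑ i ∈ S, m i j = c j) (hfix : ∀ i ∈ s, r i = c i) :
    RefinesVia (Sum.elim id fun q : S × T => (q.2 : κ)) (exchangeFamily S T r m)
      (s.disjSum Finset.univ) c (s ∪ T) where
  mapsTo := by
    rintro (i | ⟨i, j⟩) hp
    · exact Finset.mem_union_left T (by simpa using hp)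
    · exact Finset.mem_union_right s j.2
  sum_fiber i hi := by
    rw [sum_fiber_exchangeFamily (fun _ j => j)]
    simp_rw [Finset.sum_ite_eq']
    rcases Finset.mem_union.1 hi with his | hiT
    · simp_rw [if_pos his, if_neg (Finset.disjoint_left.1 hs his), Finset.sum_const_zero, add_zero,
        hfix i his]
    · simp_rw [if_neg (Finset.disjoint_right.1 hs hiT), if_pos hiT, zero_add, hcol i hiT]

end Exchange

section NestedRefinement

variable {κ : Type*} {X : Set (PartialSum A)} {c : κ → PartialSum A}

theorem Homogeneous.exists_exchange (hH : A.Homogeneous) (hX : IsSplitClosed X)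
    (hc : ∀ i, c i ∈ X) {S T : Finset κ} (hle : ∑ j ∈ T, c j ≤ ∑ i ∈ S, c i)
    (hperp : ∑ j ∈ T, c j + ∑ i ∈ S, c i ≠ ⊤) :
    ∃ (r : κ → PartialSum A) (m : κ → κ → PartialSum A),
      (∀ i ∈ S, ∑ j ∈ T, m i j + r i = c i) ∧ (∀ i ∉ S, r i = c i) ∧
      (∀ j ∈ T, ∑ i ∈ S, m i j = c j) ∧ ∀ p, exchangeFamily S T r m p ∈ X := by
  obtain ⟨m, hrow_le, hcol⟩ := hH.exists_matrix_of_sum_le_sum S T c c hle hperp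
  have hrest : ∀ i, ∃ r, (i ∈ S → ∑ j ∈ T, m i j + r = c i) ∧ (i ∉ S → r = c i) := fun i => by
    by_cases hi : i ∈ S
    · obtain ⟨r, hr⟩ := exists_add_of_le (hrow_le i hi)
      exact ⟨r, fun _ => hr.symm, absurd hi⟩
    · exact ⟨c i, fun h => absurd h hi, fun _ => rfl⟩
  choose r hrow hfix using hrest
  have hrow_perp : ∀ i ∈ S, ∑ j ∈ T, m i j + c i ≠ ⊤ := fun i hi => by
    refine ne_top_of_le_ne_top hperp (add_le_add ?_ (Finset.single_le_sum_of_canonicallyOrdered hi))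
    rw [← Finset.sum_congr rfl hcol, Finset.sum_comm]
    exact Finset.single_le_sum_of_canonicallyOrdered (f := fun i => ∑ j ∈ T, m i j) hi
  have hmem : ∀ i ∈ S, (∀ j ∈ T, m i j ∈ X) ∧ r i ∈ X := fun i hi =>
    hX.mem_of_sum_add_mem (hrow i hi ▸ hc i) (by rw [hrow i hi]; exact hrow_perp i hi)
  refine ⟨r, m, hrow, hfix, hcol, ?_⟩
  rintro (i | ⟨i, j⟩)
  · by_cases hi : i ∈ S
    · exact (hmem i hi).2
    · exact (hfix i hi ▸ hc i : r i ∈ X)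
  · exact (hmem i i.2).1 j j.2

theorem Homogeneous.exists_nested_refinesVia [Fintype κ] [DecidableEq κ]
    (hH : A.Homogeneous) (hX : IsSplitClosed X) (hcX : ∀ i, c i ∈ X) (hc : ∑ i, c i ≠ ⊤)
    {S T : Finset κ} (hle : ∑ j ∈ T, c j ≤ ∑ i ∈ S, c i) :
    ∃ (w : κ ⊕ ↥(S \ T) × ↥(T \ S) → PartialSum A) (f g : κ ⊕ ↥(S \ T) × ↥(T \ S) → κ)
      (S' T' : Finset (κ ⊕ ↥(S \ T) × ↥(T \ S))),
      RefinesVia f w Finset.univ c Finset.univ ∧ T' ⊆ S' ∧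
      RefinesVia f w S' c S ∧ RefinesVia g w T' c T ∧ ∀ p, w p ∈ X := by
  have hS : ∑ i ∈ S, c i ≠ ⊤ :=
    ne_top_of_le_ne_top hc (Finset.sum_le_sum_of_subset (Finset.subset_univ S))
  have hperp : ∑ j ∈ T \ S, c j + ∑ i ∈ S \ T, c i ≠ ⊤ := by
    rw [← Finset.sum_union disjoint_sdiff_sdiff]
    exact ne_top_of_le_ne_top hc (Finset.sum_le_sum_of_subset (Finset.subset_univ _))
  obtain ⟨r, m, hrow, hfix, hcol, hmem⟩ :=
    hH.exists_exchange hX hcX (sum_sdiff_le_sum_sdiff hS hle) hperp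
  have hfixT : ∀ i ∈ T ∩ S, r i = c i := fun i hi =>
    hfix i fun h => (Finset.mem_sdiff.1 h).2 (Finset.mem_inter.1 hi).1
  have huniv := refinesVia_exchangeFamily_row (Finset.subset_univ _) hrow hfix
  have hTrefines :=
    refinesVia_exchangeFamily_col (Finset.disjoint_sdiff_inter T S).symm hcol hfixT
  rw [Finset.univ_disjSum_univ] at huniv
  rw [Finset.union_comm, Finset.sdiff_union_inter] at hTrefines
  exact ⟨_, _, _, _, _, huniv, Finset.disjSum_mono Finset.inter_subset_right subset_rfl,
    refinesVia_exchangeFamily_row Finset.sdiff_subset hrow hfix, hTrefines, hmem⟩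

end NestedRefinement

section Lists

theorem sumList_eq_some_iff {l : List E} {a : E} :
    A.sumList l = some a ↔ (l.map ((↑) : E → PartialSum A)).sum = a := by
  have hsum : (l.map ((↑) : E → PartialSum A)).sum = A.sumList l := by
    induction l with
    | nil => rfl
    | cons x xs ih =>
      rw [List.map_cons, List.sum_cons, ih, sumList]
      cases A.sumList xs <;> rfl
  rw [hsum]
  rfl

theorem sum_get_ne_top {C : List E} (hC : (A.sumList C).isSome) :
    ∑ i, (C.get i : PartialSum A) ≠ ⊤ := by
  obtain ⟨a, ha⟩ := Option.isSome_iff_exists.1 hC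
  simp_rw [List.get_eq_getElem, Fin.sum_univ_fun_getElem, sumList_eq_some_iff.1 ha]
  exact coe_ne_top a

theorem sumList_pickList_eq_some_iff {C : List E} {S : Finset (Fin C.length)} {a : E} :
    A.sumList (pickList C S) = some a ↔ ∑ i ∈ S, (C.get i : PartialSum A) = a := by
  rw [sumList_eq_some_iff, pickList, List.map_map, ← List.sum_toFinset _ (Finset.sort_nodup _ _),
    Finset.sort_toFinset]
  rfl

theorem exists_pickList_equiv (C : List E) (S : Finset (Fin C.length)) :
    ∃ e : Fin (pickList C S).length ≃ S, ∀ k, (pickList C S).get k = C.get (e k) := by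
  have hlength : (pickList C S).length = S.card := by simp [pickList]
  exact ⟨(finCongr hlength).trans (S.orderIsoOfFin rfl).toEquiv, fun k => List.getElem_map C.get⟩

theorem exists_list_equiv {ι : Type*} [Finite ι] (w : ι → E) :
    ∃ (W : List E) (e : Fin W.length ≃ ι), ∀ k, W.get k = w (e k) := by
  obtain ⟨n, ⟨e⟩⟩ := Finite.exists_equiv_fin ι
  refine ⟨List.ofFn (w ∘ e.symm), (finCongr List.length_ofFn).trans e.symm, fun k => ?_⟩
  rw [List.get_ofFn]
  rfl

theorem RefinesVia.isRefinement {ι κ : Type*} [DecidableEq κ] {f : ι → κ} {w : ι → PartialSum A}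
    {T : Finset ι} {c : κ → PartialSum A} {S : Finset κ} (h : RefinesVia f w T c S)
    {D C : List E} (e₁ : Fin D.length ≃ T) (e₂ : Fin C.length ≃ S)
    (hD : ∀ k, (D.get k : PartialSum A) = w (e₁ k))
    (hC : ∀ k, (C.get k : PartialSum A) = c (e₂ k)) :
    A.IsRefinement D C := by
  refine ⟨fun i => {k | f (e₁ k) = e₂ i}, fun i j hij => ?_, fun k => ?_, fun i => ?_⟩
  · refine Finset.disjoint_filter.2 fun k _ hi hj => hij ?_
    exact e₂.injective (Subtype.ext (hi.symm.trans hj))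
  · exact ⟨e₂.symm ⟨f (e₁ k), h.mapsTo _ (e₁ k).2⟩, by simp⟩
  · rw [sumList_pickList_eq_some_iff, hC, ← h.sum_fiber _ (e₂ i).2, Finset.sum_filter,
      Finset.sum_filter, ← Finset.sum_coe_sort T, ← e₁.sum_comp]
    simp_rw [hD]

theorem RefinesVia.isRefinement_pickList {ι : Type*} {W C : List E} {w : ι → PartialSum A}
    {f : ι → Fin C.length} {T : Finset ι} {S : Finset (Fin C.length)}
    (h : RefinesVia f w T (fun i => (C.get i : PartialSum A)) S) (e : Fin W.length ≃ ι)
    (hW : ∀ k, (W.get k : PartialSum A) = w (e k)) :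
    A.IsRefinement (pickList W (T.map e.symm.toEmbedding)) (pickList C S) := by
  obtain ⟨e₁, h₁⟩ := exists_pickList_equiv W (T.map e.symm.toEmbedding)
  obtain ⟨e₂, h₂⟩ := exists_pickList_equiv C S
  refine h.isRefinement (e₁.trans (e.subtypeEquiv fun k => by simp)) e₂ (fun k => ?_) fun k => ?_
  · rw [h₁, hW]
    rfl
  · rw [h₂]

end Lists

end EffectAlgebra

/-- refinement of an orthogonal cover compatible with `b ≤ a`,
with range contained in the closure of the range of the original cover. -/
theorem cover_refinement {E : Type*} (A : EffectAlgebra E)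
    (hH : A.Homogeneous) (M : Finset E) (hM : A.Compatible ↑M)
    (a b : E) (ha : a ∈ M) (hb : b ∈ M) (hba : A.le b a)
    (C : List E) (hC : A.IsCoverOf C ↑M)
    (SA SB : Finset (Fin C.length))
    (hSA : A.sumList (EffectAlgebra.pickList C SA) = some a)
    (hSB : A.sumList (EffectAlgebra.pickList C SB) = some b) :
    ∃ (W : List E) (AW BW : Finset (Fin W.length)),
      A.IsRefinement W C ∧ BW ⊆ AW ∧
      A.IsRefinement (EffectAlgebra.pickList W AW) (EffectAlgebra.pickList C SA) ∧
      A.IsRefinement (EffectAlgebra.pickList W BW) (EffectAlgebra.pickList C SB) ∧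
      ∀ w ∈ W, w ∈ A.closure {c | c ∈ C} := by
  have hA := EffectAlgebra.sumList_pickList_eq_some_iff.1 hSA
  have hB := EffectAlgebra.sumList_pickList_eq_some_iff.1 hSB
  have hle : ∑ i ∈ SB, (C.get i : A.PartialSum) ≤ ∑ i ∈ SA, (C.get i : A.PartialSum) := by
    rw [hA, hB]
    exact EffectAlgebra.PartialSum.coe_le_coe_iff.2 hba
  obtain ⟨w, f, g, TA, TB, hf, hTBA, hfA, hgB, hw⟩ :=
    hH.exists_nested_refinesVia (EffectAlgebra.isSplitClosed_closure {c | c ∈ C})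
      (fun i => Set.mem_image_of_mem _ (EffectAlgebra.subset_closure _ (List.get_mem C i)))
      (EffectAlgebra.sum_get_ne_top hC.1) hle
  choose v hv hvw using hw
  obtain ⟨W, e, hW⟩ := EffectAlgebra.exists_list_equiv v
  have hWw : ∀ k, (W.get k : A.PartialSum) = w (e k) := fun k => by rw [hW, hvw]
  refine ⟨W, TA.map e.symm.toEmbedding, TB.map e.symm.toEmbedding, ?_,
    Finset.map_subset_map.2 hTBA, hfA.isRefinement_pickList e hWw,
    hgB.isRefinement_pickList e hWw, fun x hx => ?_⟩
  · exact hf.isRefinement (e.trans (Equiv.subtypeUnivEquiv Finset.mem_univ).symm)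
      (Equiv.subtypeUnivEquiv Finset.mem_univ).symm hWw fun _ => rfl
  · obtain ⟨k, rfl⟩ := List.get_of_mem hx
    exact hW k ▸ hv (e k)
end

section
/- For an effect algebra E, the following are equivalent: (a) E satisfies the Riesz decomposition property; (b) E is homogeneous and E is a compatible subset of itself (i.e. every finite subset of E has an orthogonal cover). -/
/-!
Undefined sums are made total by adjoining an absorbing element `⊤`; this gives a canonically
ordered commutative monoid in which `x ≠ ⊤` says that `x` is defined and cancellation holds below
`⊤`.

If `A` has the Riesz decomposition property, a finite family with sum `1` covering a finite set is
refined, one element `a ≤ 1` at a time, by splitting `a` along the family.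

Conversely, let `u ≤ s = v ⊕ w` and let `U, V, S` index `u, v, s` in an orthogonal cover. Cancelling
the common parts, the sum over `V \ S` is below the one over `S \ V`, and the sum over `U \ S` is
below the one over `S \ U`. The index sets being disjoint, both pairs are orthogonal, so homogeneity
applies to them, and the two resulting splittings combine to one of `u` along `v, w`.
-/

theorem exists_list_get_eq_comp_equiv {ι α : Type*} [Finite ι] (p : ι → α) :
    ∃ (C : List α) (e : Fin C.length ≃ ι), C.get = p ∘ e :=
  ⟨List.ofFn (p ∘ (Finite.equivFin ι).symm),
    (finCongr List.length_ofFn).trans (Finite.equivFin ι).symm, funext fun _ => List.get_ofFn _ _⟩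

theorem sum_disjSum_self_elim {ι N : Type*} [AddCommMonoid N] (g h : ι → N) (S : Finset ι) :
    ∑ i ∈ S.disjSum S, Sum.elim g h i = ∑ i ∈ S, (g i + h i) := by
  simp [Finset.sum_disjSum, Finset.sum_add_distrib]

namespace EffectAlgebra

variable {E : Type*} {A : EffectAlgebra E}

/-- The effect algebra `A` with an absorbing element `⊤` adjoined as the value of all undefined
sums. Its addition is total, so that the theory of finite sums in commutative monoids applies. -/
def Totalization (_A : EffectAlgebra E) : Type _ := Option E

/-- The embedding of an effect algebra into its totalization. -/
def of (A : EffectAlgebra E) (a : E) : A.Totalization := some a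

namespace Totalization

instance : Top A.Totalization := ⟨none⟩

instance : Zero A.Totalization := ⟨A.of A.zero⟩

instance : Add A.Totalization :=
  ⟨fun x y => Option.bind x fun a => Option.bind y fun b => A.oplus a b⟩

@[elab_as_elim, induction_eliminator]
theorem induction {motive : A.Totalization → Prop} (top : motive ⊤) (of : ∀ a, motive (A.of a))
    (x : A.Totalization) : motive x :=
  match x with
  | none => top
  | some a => of a

theorem of_ne_top (a : E) : A.of a ≠ ⊤ := Option.some_ne_none a

theorem of_injective : Function.Injective A.of := Option.some_injective E

theorem exists_of_of_ne_top {x : A.Totalization} (hx : x ≠ ⊤) : ∃ a, x = A.of a := by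
  induction x with
  | top => exact absurd rfl hx
  | of a => exact ⟨a, rfl⟩

theorem of_add_of_eq_of_iff {a b c : E} : A.of a + A.of b = A.of c ↔ A.oplus a b = some c := Iff.rfl

theorem top_add (x : A.Totalization) : ⊤ + x = ⊤ := rfl

theorem add_top (x : A.Totalization) : x + ⊤ = ⊤ := by
  induction x with
  | top => rfl
  | of a => rfl

theorem add_eq_of_iff {x y : A.Totalization} {c : E} :
    x + y = A.of c ↔ ∃ a b, x = A.of a ∧ y = A.of b ∧ A.oplus a b = some c := by
  constructor
  · intro h
    obtain ⟨a, rfl⟩ : ∃ a, x = A.of a :=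
      exists_of_of_ne_top fun hx => of_ne_top c (by rw [← h, hx, top_add])
    obtain ⟨b, rfl⟩ : ∃ b, y = A.of b :=
      exists_of_of_ne_top fun hy => of_ne_top c (by rw [← h, hy, add_top])
    exact ⟨a, b, rfl, rfl, h⟩
  · rintro ⟨a, b, rfl, rfl, h⟩
    exact h

protected theorem add_comm (x y : A.Totalization) : x + y = y + x := by
  induction x with
  | top => exact (add_top y).symm
  | of a =>
    induction y with
    | top => rfl
    | of b => exact A.comm a b

theorem add_assoc_of_eq_of {x y z : A.Totalization} {d : E} (h : x + y + z = A.of d) :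
    x + (y + z) = A.of d := by
  obtain ⟨ab, c, hxy, rfl, habc⟩ := add_eq_of_iff.1 h
  obtain ⟨a, b, rfl, rfl, hab⟩ := add_eq_of_iff.1 hxy
  obtain ⟨bc, hbc, habc'⟩ := A.assoc a b c ab d hab habc
  exact add_eq_of_iff.2 ⟨a, bc, rfl, hbc, habc'⟩

protected theorem add_assoc (x y z : A.Totalization) : x + y + z = x + (y + z) := by
  have reverse (x y z : A.Totalization) : x + (y + z) = z + y + x := by
    rw [Totalization.add_comm x, Totalization.add_comm y]
  by_cases h : x + y + z = ⊤
  · by_contra hne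
    obtain ⟨d, hd⟩ := exists_of_of_ne_top fun h' => hne (h.trans h'.symm)
    rw [reverse] at hd
    have hd' := add_assoc_of_eq_of hd
    rw [reverse, h] at hd'
    exact of_ne_top d hd'.symm
  · obtain ⟨d, hd⟩ := exists_of_of_ne_top h
    rw [hd, add_assoc_of_eq_of hd]

theorem eq_of_add_eq_one {x y z : A.Totalization} (hy : x + y = A.of A.one)
    (hz : x + z = A.of A.one) : y = z := by
  obtain ⟨a, b, rfl, rfl, hab⟩ := add_eq_of_iff.1 hy
  obtain ⟨a', c, haa', rfl, hac⟩ := add_eq_of_iff.1 hz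
  obtain rfl := of_injective haa'
  rw [A.compl_unique a b c hab hac]

theorem zero_add_one : 0 + A.of A.one = A.of A.one := by
  obtain ⟨b, hb⟩ := A.compl_exists A.one
  rw [A.comm] at hb
  rwa [A.add_one b _ hb] at hb

protected theorem zero_add (x : A.Totalization) : 0 + x = x := by
  induction x with
  | top => exact add_top 0
  | of a =>
    obtain ⟨b, hb⟩ := A.compl_exists a
    have hab : A.of a + A.of b = A.of A.one := hb
    refine eq_of_add_eq_one (x := A.of b) ?_ ((Totalization.add_comm _ _).trans hab)
    rw [Totalization.add_comm, Totalization.add_assoc, hab, zero_add_one]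

instance : AddCommMonoid A.Totalization where
  add_assoc := Totalization.add_assoc
  zero_add := Totalization.zero_add
  add_zero x := (Totalization.add_comm x 0).trans (Totalization.zero_add x)
  add_comm := Totalization.add_comm
  nsmul := nsmulRec

theorem ne_top_of_add_left {x y : A.Totalization} (h : x + y ≠ ⊤) : x ≠ ⊤ := by
  rintro rfl
  exact h (top_add y)

theorem exists_add_eq_one {x : A.Totalization} (hx : x ≠ ⊤) : ∃ y, x + y = A.of A.one := by
  obtain ⟨a, rfl⟩ := exists_of_of_ne_top hx
  obtain ⟨b, hb⟩ := A.compl_exists a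
  exact ⟨A.of b, hb⟩

theorem add_left_cancel_of_ne_top {x y z : A.Totalization} (hne : x + y ≠ ⊤)
    (h : x + y = x + z) : y = z := by
  obtain ⟨t, ht⟩ := exists_add_eq_one hne
  apply eq_of_add_eq_one (x := x + t)
  · rw [← ht, add_right_comm]
  · rw [← ht, h, add_right_comm]

theorem eq_zero_of_add_eq_zero {x y : A.Totalization} (h : x + y = 0) : x = 0 := by
  have hx_one : x + A.of A.one ≠ ⊤ := by
    apply ne_top_of_add_left (y := y)
    rw [add_right_comm, h, zero_add]
    exact of_ne_top _
  obtain ⟨c, hc⟩ := exists_of_of_ne_top hx_one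
  obtain ⟨a, b, rfl, hb, hab⟩ := add_eq_of_iff.1 hc
  rw [← of_injective hb] at hab
  exact congrArg A.of (A.add_one a c hab)

instance : PartialOrder A.Totalization where
  le x y := ∃ z, y = x + z
  le_refl x := ⟨0, (add_zero x).symm⟩
  le_trans := by
    rintro x _ _ ⟨z, rfl⟩ ⟨t, rfl⟩
    exact ⟨z + t, add_assoc x z t⟩
  le_antisymm := by
    rintro x _ ⟨z, rfl⟩ ⟨t, ht⟩
    by_cases hx : x = ⊤
    · rw [hx, top_add]
    · have hzt : z + t = 0 := by
        refine (add_left_cancel_of_ne_top (x := x) ?_ ?_).symm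
        · rwa [add_zero]
        · rw [add_zero, ← add_assoc, ← ht]
      rw [eq_zero_of_add_eq_zero hzt, add_zero]

instance : OrderTop A.Totalization where
  le_top x := ⟨⊤, (add_top x).symm⟩

instance : IsOrderedAddMonoid A.Totalization where
  add_le_add_left := by
    rintro _ _ ⟨z, rfl⟩ t
    exact ⟨z, add_right_comm _ z t⟩

instance : CanonicallyOrderedAdd A.Totalization where
  exists_add_of_le h := h
  le_self_add _ y := ⟨y, rfl⟩
  le_add_self x y := ⟨y, add_comm y x⟩

theorem le_of_add_le_add_left_of_ne_top {x y z : A.Totalization} (hne : x + z ≠ ⊤)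
    (h : x + y ≤ x + z) : y ≤ z := by
  obtain ⟨t, ht⟩ := exists_add_of_le h
  exact ⟨t, add_left_cancel_of_ne_top hne (ht.trans (add_assoc x y t))⟩

theorem le_of_iff {x : A.Totalization} {b : E} : x ≤ A.of b ↔ ∃ a, x = A.of a ∧ A.le a b := by
  constructor
  · rintro ⟨z, hz⟩
    obtain ⟨a, c, rfl, -, hac⟩ := add_eq_of_iff.1 hz.symm
    exact ⟨a, rfl, c, hac⟩
  · rintro ⟨a, rfl, c, hac⟩
    exact ⟨A.of c, (of_add_of_eq_of_iff.2 hac).symm⟩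

theorem of_le_of_iff {a b : E} : A.of a ≤ A.of b ↔ A.le a b := by
  rw [le_of_iff]
  exact ⟨fun ⟨_, haa', h⟩ => of_injective haa' ▸ h, fun h => ⟨a, rfl, h⟩⟩

theorem of_le_one (a : E) : A.of a ≤ A.of A.one := of_le_of_iff.2 (A.compl_exists a)

theorem of_add_of_compl (a : E) : A.of a + A.of (A.compl a) = A.of A.one :=
  Classical.epsilon_spec (p := fun b => A.oplus a b = some A.one) (A.compl_exists a)

theorem of_le_of_compl_of_add_ne_top {a b : E} (h : A.of a + A.of b ≠ ⊤) :
    A.of a ≤ A.of (A.compl b) := by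
  obtain ⟨t, ht⟩ := exists_add_eq_one h
  refine ⟨t, eq_of_add_eq_one (of_add_of_compl b) ?_⟩
  rw [← ht, add_left_comm, add_assoc]

/-- `u` splits along `v` and `w`: the conclusion of the Riesz decomposition property, read in the
totalization. -/
def Splits (u v w : A.Totalization) : Prop := ∃ u₁ ≤ v, ∃ u₂ ≤ w, u₁ + u₂ = u

theorem splits_of_iff {u v w : E} : Splits (A.of u) (A.of v) (A.of w) ↔
    ∃ u₁ u₂, A.le u₁ v ∧ A.le u₂ w ∧ A.oplus u₁ u₂ = some u := by
  constructor
  · rintro ⟨x, hx, y, hy, hxy⟩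
    obtain ⟨u₁, rfl, hu₁⟩ := le_of_iff.1 hx
    obtain ⟨u₂, rfl, hu₂⟩ := le_of_iff.1 hy
    exact ⟨u₁, u₂, hu₁, hu₂, hxy⟩
  · rintro ⟨u₁, u₂, hu₁, hu₂, h⟩
    exact ⟨A.of u₁, of_le_of_iff.2 hu₁, A.of u₂, of_le_of_iff.2 hu₂, h⟩

/-- The elements of `M` are sums of subfamilies of `f`. Together with `∑ i, f i ≠ ⊤` this says that
`f` is an orthogonal cover of `M`, with an arbitrary index type instead of positions in a list. -/
def Covers {ι : Type*} (f : ι → A.Totalization) (M : Set E) : Prop :=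
  ∀ a ∈ M, ∃ S : Finset ι, ∑ i ∈ S, f i = A.of a

theorem sumList_eq_some_iff {C : List E} {s : E} :
    A.sumList C = some s ↔ (C.map A.of).sum = A.of s := by
  induction C generalizing s with
  | nil => exact Iff.rfl
  | cons c C ih =>
    rw [sumList, List.map_cons, List.sum_cons, Option.bind_eq_some_iff, add_eq_of_iff]
    constructor
    · rintro ⟨t, ht, hct⟩
      exact ⟨c, t, rfl, ih.1 ht, hct⟩
    · rintro ⟨c', t, hcc', ht, hct⟩
      exact ⟨t, ih.2 ht, of_injective hcc' ▸ hct⟩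

theorem sumList_isSome_iff {C : List E} :
    (A.sumList C).isSome ↔ ∑ i : Fin C.length, A.of (C.get i) ≠ ⊤ := by
  have hsum : (C.map A.of).sum = ∑ i : Fin C.length, A.of (C.get i) := by
    rw [← List.sum_ofFn, ← Function.comp_def A.of, ← List.map_ofFn, List.ofFn_get]
  simp only [Option.isSome_iff_exists, sumList_eq_some_iff, hsum]
  exact ⟨fun ⟨s, hs⟩ => hs ▸ of_ne_top s, exists_of_of_ne_top⟩

theorem sumList_pickList_eq_some_iff {C : List E} {S : Finset (Fin C.length)} {s : E} :
    A.sumList (pickList C S) = some s ↔ ∑ i ∈ S, A.of (C.get i) = A.of s := by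
  have hsum : ((pickList C S).map A.of).sum = ∑ i ∈ S, A.of (C.get i) := by
    rw [pickList, List.map_map, ← Finset.sum_map_toList]
    exact ((Finset.sort_perm_toList S _).map _).sum_eq
  rw [sumList_eq_some_iff, hsum]

theorem isCoverOf_iff {C : List E} {M : Set E} : A.IsCoverOf C M ↔
    ∑ i : Fin C.length, A.of (C.get i) ≠ ⊤ ∧ Covers (fun i => A.of (C.get i)) M := by
  simp only [IsCoverOf, Covers, sumList_isSome_iff, sumList_pickList_eq_some_iff]

section Families

variable {ι κ : Type*} {f : ι → A.Totalization} {M : Set E}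

theorem Covers.comp_equiv (hf : Covers f M) (e : κ ≃ ι) : Covers (f ∘ e) M := by
  intro a ha
  obtain ⟨S, hS⟩ := hf a ha
  refine ⟨S.map e.symm.toEmbedding, ?_⟩
  simp [Finset.sum_map, hS]

theorem Covers.exists_isCoverOf [Fintype ι] (hf : Covers f M) (hne : ∑ i, f i ≠ ⊤) :
    ∃ C, A.IsCoverOf C M := by
  have hf_ne (i : ι) : f i ≠ ⊤ :=
    ne_top_of_le_ne_top hne (Finset.single_le_sum_of_canonicallyOrdered (Finset.mem_univ i))
  choose p hp using fun i => exists_of_of_ne_top (hf_ne i)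
  obtain ⟨C, e, hC⟩ := exists_list_get_eq_comp_equiv p
  have hget : (fun i => A.of (C.get i)) = f ∘ e := by
    ext i
    rw [hC, Function.comp_apply, Function.comp_apply, hp]
  refine ⟨C, isCoverOf_iff.2 ?_⟩
  rw [hget]
  exact ⟨(e.sum_comp f).trans_ne hne, hf.comp_equiv e⟩

theorem Covers.sumElim_insert [Fintype ι] {g h : ι → A.Totalization} {a : E}
    (hgh : Covers (g + h) M) (hg : ∑ i, g i = A.of a) :
    Covers (Sum.elim g h) (insert a M) := by
  rintro b (rfl | hb)
  · exact ⟨Finset.univ.disjSum ∅, by simpa [Finset.sum_disjSum] using hg⟩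
  · obtain ⟨S, hS⟩ := hgh b hb
    exact ⟨S.disjSum S, (sum_disjSum_self_elim g h S).trans hS⟩

end Families

end Totalization

open Totalization

theorem RDP.homogeneous (hA : A.RDP) : A.Homogeneous :=
  fun u v w s hs hu _ => hA u v w s hs hu

theorem RDP.splits (hA : A.RDP) {u v w : A.Totalization} (hne : v + w ≠ ⊤) (hu : u ≤ v + w) :
    Splits u v w := by
  obtain ⟨s, hs⟩ := exists_of_of_ne_top hne
  rw [hs] at hu
  obtain ⟨v, w, rfl, rfl, hvw⟩ := add_eq_of_iff.1 hs
  obtain ⟨u, rfl, hus⟩ := le_of_iff.1 hu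
  exact splits_of_iff.2 (hA u v w s hvw hus)

theorem RDP.exists_le_sum_eq (hA : A.RDP) {ι : Type*} (f : ι → A.Totalization) (S : Finset ι)
    {x : A.Totalization} (hne : ∑ i ∈ S, f i ≠ ⊤) (hx : x ≤ ∑ i ∈ S, f i) :
    ∃ g : ι → A.Totalization, (∀ i ∈ S, g i ≤ f i) ∧ ∑ i ∈ S, g i = x := by
  classical
  induction S using Finset.induction_on generalizing x with
  | empty => exact ⟨0, by simp, (nonpos_iff_eq_zero.1 hx).symm⟩
  | insert i S hi ih =>
    rw [Finset.sum_insert hi] at hne hx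
    obtain ⟨x₁, hx₁, x₂, hx₂, rfl⟩ := hA.splits hne hx
    obtain ⟨g, hgf, hg⟩ := ih (ne_top_of_le_ne_top hne le_add_self) hx₂
    refine ⟨Function.update g i x₁, fun j hj => ?_, ?_⟩
    · obtain rfl | hji := eq_or_ne j i
      · simpa using hx₁
      · simpa [hji] using hgf j (Finset.mem_of_mem_insert_of_ne hj hji)
    · rw [Finset.sum_insert hi, Finset.sum_update_of_notMem hi, Function.update_self, hg]

theorem RDP.exists_covers (hA : A.RDP) (F : Finset E) :
    ∃ (ι : Type) (_ : Fintype ι) (f : ι → A.Totalization),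
      ∑ i, f i = A.of A.one ∧ Covers f F := by
  classical
  induction F using Finset.induction_on with
  | empty => exact ⟨Unit, inferInstance, fun _ => A.of A.one, by simp, by simp [Covers]⟩
  | insert a F _ ih =>
    obtain ⟨ι, _, f, hf_one, hf⟩ := ih
    obtain ⟨g, hgf, hg⟩ := hA.exists_le_sum_eq f Finset.univ (x := A.of a)
      (hf_one ▸ of_ne_top _) (hf_one ▸ of_le_one a)
    choose h hgh using fun i => exists_add_of_le (hgf i (Finset.mem_univ i))
    obtain rfl : f = g + h := funext hgh
    refine ⟨ι ⊕ ι, inferInstance, Sum.elim g h, ?_, ?_⟩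
    · rw [← hf_one, ← Finset.univ_disjSum_univ, sum_disjSum_self_elim]
      rfl
    · rw [Finset.coe_insert]
      exact hf.sumElim_insert hg

theorem RDP.compatible (hA : A.RDP) : A.Compatible Set.univ := by
  intro F _
  obtain ⟨ι, _, f, hf_one, hf⟩ := hA.exists_covers F
  obtain ⟨C, hC⟩ := hf.exists_isCoverOf (hf_one ▸ of_ne_top _)
  exact ⟨C, fun c _ => Set.mem_univ c, hC⟩

theorem Homogeneous.splits (hA : A.Homogeneous) {u v w : A.Totalization} (hne : u + (v + w) ≠ ⊤)
    (hu : u ≤ v + w) : Splits u v w := by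
  obtain ⟨s, hs⟩ := exists_of_of_ne_top (ne_top_of_le_ne_top hne le_add_self)
  rw [hs] at hu hne
  obtain ⟨v, w, rfl, rfl, hvw⟩ := add_eq_of_iff.1 hs
  obtain ⟨u, rfl, hus⟩ := le_of_iff.1 hu
  exact splits_of_iff.2 (hA u v w s hvw hus (of_le_of_iff.1 (of_le_of_compl_of_add_ne_top hne)))

-- In a cover, `a, b, c, d` are the sums over the four parts `S ∩ U ∩ V`, `(S ∩ U) \ V`,
-- `(S \ U) ∩ V`, `(S \ U) \ V` of `S`, while `x` and `y` are those over `V \ S` and `U \ S`.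
theorem Homogeneous.splits_add_of_ne_top (hA : A.Homogeneous) {a b c d x y w : A.Totalization}
    (hx : x + (b + d) ≠ ⊤) (hy : y + (c + d) ≠ ⊤) (hne : a + b + c + d ≠ ⊤)
    (hw : a + c + x + w = a + b + c + d) (hu : a + b + y ≤ a + b + c + d) :
    Splits (a + b + y) (a + c + x) w := by
  have hxw : x + w = b + d := by
    apply add_left_cancel_of_ne_top (x := a + c)
    · rwa [← add_assoc, hw]
    · rw [← add_assoc, hw]
      abel
  obtain ⟨x₁, ⟨w₁, rfl⟩, x₂, ⟨w₂, rfl⟩, rfl⟩ := hA.splits hx ⟨w, hxw.symm⟩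
  obtain rfl : w = w₁ + w₂ := by
    apply add_left_cancel_of_ne_top (x := x₁ + x₂)
    · exact ne_top_of_le_ne_top hx (hxw ▸ le_add_self)
    · rw [hxw]
      abel
  have hy_le : y ≤ c + x₂ + w₂ := by
    have hsum : a + (x₁ + w₁) + c + (x₂ + w₂) = a + (x₁ + w₁) + (c + x₂ + w₂) := by abel
    rw [hsum] at hne hu
    exact le_of_add_le_add_left_of_ne_top hne hu
  have hy_ne : y + (c + x₂ + w₂) ≠ ⊤ := by rwa [add_assoc c]
  obtain ⟨y₁, hy₁, y₂, hy₂, rfl⟩ := hA.splits hy_ne hy_le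
  refine ⟨a + x₁ + y₁, ?_, w₁ + y₂, by gcongr, by abel⟩
  calc a + x₁ + y₁ ≤ a + x₁ + (c + x₂) := by gcongr
    _ = a + c + (x₁ + x₂) := by abel

theorem Homogeneous.splits_sum (hA : A.Homogeneous) {ι : Type*} [Fintype ι]
    {f : ι → A.Totalization} (hne : ∑ i, f i ≠ ⊤) {U V S : Finset ι} {w : A.Totalization}
    (hw : ∑ i ∈ V, f i + w = ∑ i ∈ S, f i) (hu : ∑ i ∈ U, f i ≤ ∑ i ∈ S, f i) :
    Splits (∑ i ∈ U, f i) (∑ i ∈ V, f i) w := by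
  classical
  have sum_ne_top (X : Finset ι) : ∑ i ∈ X, f i ≠ ⊤ :=
    ne_top_of_le_ne_top hne (Finset.sum_le_sum_of_subset (Finset.subset_univ X))
  have sum_split (X Y : Finset ι) : ∑ i ∈ X, f i = ∑ i ∈ X ∩ Y, f i + ∑ i ∈ X \ Y, f i :=
    (Finset.sum_inter_add_sum_sdiff X Y f).symm
  have sum_sdiff_add_ne_top (X Y : Finset ι) : ∑ i ∈ X \ Y, f i + ∑ i ∈ Y \ X, f i ≠ ⊤ := by
    rw [← Finset.sum_union disjoint_sdiff_sdiff]
    exact sum_ne_top _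
  have hU : ∑ i ∈ U, f i =
      ∑ i ∈ S ∩ U ∩ V, f i + ∑ i ∈ (S ∩ U) \ V, f i + ∑ i ∈ U \ S, f i := by
    rw [sum_split U S, Finset.inter_comm U S, sum_split (S ∩ U) V]
  have hV : ∑ i ∈ V, f i =
      ∑ i ∈ S ∩ U ∩ V, f i + ∑ i ∈ (S \ U) ∩ V, f i + ∑ i ∈ V \ S, f i := by
    rw [sum_split V S, Finset.inter_comm V S, sum_split (S ∩ V) U, Finset.inter_right_comm,
      ← Finset.sdiff_inter_right_comm]
  have hS : ∑ i ∈ S, f i = ∑ i ∈ S ∩ U ∩ V, f i + ∑ i ∈ (S ∩ U) \ V, f i +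
      ∑ i ∈ (S \ U) ∩ V, f i + ∑ i ∈ (S \ U) \ V, f i := by
    rw [sum_split S U, sum_split (S ∩ U) V, sum_split (S \ U) V, ← add_assoc]
  have hSV : ∑ i ∈ S \ V, f i = ∑ i ∈ (S ∩ U) \ V, f i + ∑ i ∈ (S \ U) \ V, f i := by
    rw [sum_split (S \ V) U, Finset.sdiff_inter_right_comm, sdiff_right_comm]
  have hS_ne := sum_ne_top S
  have hVS_ne := sum_sdiff_add_ne_top V S
  have hUS_ne := sum_sdiff_add_ne_top U S
  rw [hSV] at hVS_ne
  rw [sum_split (S \ U) V] at hUS_ne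
  rw [hS] at hS_ne hw hu
  rw [hV] at hw ⊢
  rw [hU] at hu ⊢
  exact hA.splits_add_of_ne_top hVS_ne hUS_ne hS_ne hw hu

theorem Homogeneous.rdp_of_compatible (hA : A.Homogeneous) (hC : A.Compatible Set.univ) :
    A.RDP := by
  classical
  intro u v w s hs hu
  obtain ⟨C, -, hcover⟩ := hC {u, v, s} (Set.subset_univ _)
  obtain ⟨hne, hcovers⟩ := isCoverOf_iff.1 hcover
  obtain ⟨U, hU⟩ := hcovers u (by simp)
  obtain ⟨V, hV⟩ := hcovers v (by simp)
  obtain ⟨S, hS⟩ := hcovers s (by simp)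
  rw [← splits_of_iff, ← hU, ← hV]
  apply hA.splits_sum hne (S := S)
  · rw [hV, hS]
    exact hs
  · rw [hU, hS]
    exact of_le_of_iff.2 hu

end EffectAlgebra

/-- `E` satisfies the Riesz decomposition property iff `E` is
homogeneous and compatible. -/
theorem rdp_iff_homogeneous_and_compatible {E : Type*} (A : EffectAlgebra E) :
    A.RDP ↔ (A.Homogeneous ∧ A.Compatible Set.univ) := by
  constructor
  · exact fun hA => ⟨hA.homogeneous, hA.compatible⟩
  · exact fun ⟨hA, hC⟩ => hA.rdp_of_compatible hC
end
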